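/- For λ with Im(λ) > 0, the map φ'(z) = −1/(z+λ) is a strict hyperbolic contraction of the upper half plane: dist_ℍ(φ'(u), φ'(v)) < dist_ℍ(u,v) for all distinct u, v in the upper half plane. -/

import Mathlib

/-!
Write `-1 / (z + a) = S • (z + a)` with `S` the modular inversion. Inversion is an isometry of the
upper half plane, while translation by `a` preserves Euclidean distances and raises both points;
since `sinh (dist z w / 2) = |z - w| / (2 √(z.im * w.im))`, translation strictly shrinks hyperbolic
distances between distinct points.
-/

open scoped UpperHalfPlane MatrixGroups

section Isometry

variable {R : Type*} [CommRing R] [Algebra R ℝ]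

theorem map_algebraMap_smul_upperHalfPlane (g : SL(2, R)) (z : ℍ) :
    Matrix.SpecialLinearGroup.map (algebraMap R ℝ) g • z = g • z := by
  ext
  simp [UpperHalfPlane.coe_specialLinearGroup_apply]

theorem dist_SL_smul_upperHalfPlane (g : SL(2, R)) (z w : ℍ) :
    dist (g • z) (g • w) = dist z w := by
  rw [← map_algebraMap_smul_upperHalfPlane g z, ← map_algebraMap_smul_upperHalfPlane g w, dist_smul]

end Isometry

theorem dist_lt_dist_of_dist_coe_le_of_im_mul_im_lt {z w z' w' : ℍ} (hzw : z ≠ w)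
    (hdist : dist (z' : ℂ) w' ≤ dist (z : ℂ) w) (him : z.im * w.im < z'.im * w'.im) :
    dist z' w' < dist z w := by
  have hpos : 0 < dist (z : ℂ) w := dist_pos.2 (UpperHalfPlane.coe_injective.ne hzw)
  have hsqrt : √(z.im * w.im) < √(z'.im * w'.im) := Real.sqrt_lt_sqrt (by positivity) him
  have hsinh : Real.sinh (dist z' w' / 2) < Real.sinh (dist z w / 2) := by
    rw [UpperHalfPlane.sinh_half_dist, UpperHalfPlane.sinh_half_dist]
    calc dist (z' : ℂ) w' / (2 * √(z'.im * w'.im))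
        ≤ dist (z : ℂ) w / (2 * √(z'.im * w'.im)) := by gcongr
      _ < dist (z : ℂ) w / (2 * √(z.im * w.im)) := by gcongr
  linarith [Real.sinh_lt_sinh.1 hsinh]

/-- Translation `z ↦ z + a` of the upper half plane by one of its own points, so that the
imaginary part strictly increases. -/
def upperTranslate (a z : ℍ) : ℍ :=
  ⟨z + a, add_pos z.im_pos a.im_pos⟩

theorem dist_upperTranslate_lt_dist (a : ℍ) {z w : ℍ} (hzw : z ≠ w) :
    dist (upperTranslate a z) (upperTranslate a w) < dist z w := by
  apply dist_lt_dist_of_dist_coe_le_of_im_mul_im_lt hzw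
  · exact (dist_add_right (z : ℂ) w a).le
  · change z.im * w.im < (z.im + a.im) * (w.im + a.im)
    gcongr <;> exact lt_add_of_pos_right _ a.im_pos

theorem coe_modular_S_smul_upperTranslate (a z : ℍ) :
    ((ModularGroup.S • upperTranslate a z : ℍ) : ℂ) = -1 / ((z : ℂ) + a) := by
  rw [UpperHalfPlane.modular_S_smul, UpperHalfPlane.coe_mk, inv_neg, neg_div, one_div]
  rfl

theorem stmt7 (lam : ℂ) (hlam : 0 < lam.im) (u v : UpperHalfPlane) (huv : u ≠ v)
    (hu : 0 < (-1 / ((u : ℂ) + lam)).im) (hv : 0 < (-1 / ((v : ℂ) + lam)).im) :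
    dist (⟨-1 / ((u : ℂ) + lam), hu⟩ : UpperHalfPlane)
         (⟨-1 / ((v : ℂ) + lam), hv⟩ : UpperHalfPlane) < dist u v := by
  lift lam to ℍ using hlam
  calc dist (⟨-1 / ((u : ℂ) + lam), hu⟩ : ℍ) ⟨-1 / ((v : ℂ) + lam), hv⟩
      = dist (ModularGroup.S • upperTranslate lam u) (ModularGroup.S • upperTranslate lam v) := by
        congr 1 <;> exact UpperHalfPlane.ext (coe_modular_S_smul_upperTranslate lam _).symm
    _ = dist (upperTranslate lam u) (upperTranslate lam v) := dist_SL_smul_upperHalfPlane ..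
    _ < dist u v := dist_upperTranslate_lt_dist lam huv
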